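/- Let A ⊆ ℝ^d be a set with positive reach, 0 < k < d, and assume every point of A has a relatively open neighbourhood in A that is the graph of a K-Lipschitz map from an open ball in a k-dimensional subspace W to W^⊥. Then A is a k-dimensional C^{1,1} manifold. -/

import Mathlib

open Metric Set Filter
open scoped ENNReal RealInnerProductSpace Topology NNReal

noncomputable section

variable {E : Type*} [NormedAddCommGroup E] [InnerProductSpace ℝ E]

/-- `x` has a unique nearest point in `A`. -/
def UnpPt (A : Set E) (x : E) : Prop :=
  ∃! a, a ∈ A ∧ dist x a = Metric.infDist x A

/-- The reach of `A` at a point `a` (Federer). -/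
def locReach (A : Set E) (a : E) : ℝ≥0∞ :=
  ⨆ (r : ℝ≥0) (_ : ∀ x : E, dist x a < (r : ℝ) → UnpPt A x), (r : ℝ≥0∞)

/-- The (global) reach of `A`. -/
def setReach (A : Set E) : ℝ≥0∞ := ⨅ a ∈ A, locReach A a

/-- The tangent cone of `A` at `a` in the sense of Federer. -/
def Tan (A : Set E) (a : E) : Set E :=
  {u | u = 0 ∨ ∃ (x : ℕ → E) (r : ℕ → ℝ),
    (∀ i, x i ∈ A ∧ x i ≠ a ∧ 0 < r i) ∧
    Tendsto x atTop (nhds a) ∧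
    Tendsto (fun i => r i • (x i - a)) atTop (nhds u)}

/-- The normal cone of `A` at `a`: the dual cone of the tangent cone. -/
def Nor (A : Set E) (a : E) : Set E :=
  {u | ∀ v ∈ Tan A a, ⟪u, v⟫ ≤ 0}

/-! Where nearest points to `A` are unique, the distance to `A` grows at slopes arbitrarily close to
`1`: follow the ray from the nearest point and use that nearest points depend continuously on the
base point. Hence, if this holds throughout the ball of radius `ε` around `x ∉ A`, the distance
reaches `infDist x A + ε` on its boundary. Equality in the triangle inequality puts the point where
this happens on the ray from the nearest point `p` of `x` through `x`, so the ball around it with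
`p` on its boundary misses `A`. This is Federer's inequality
`2 (‖x - p‖ + ε) ⟪x - p, b - p⟫ ≤ ‖x - p‖ ‖b - p‖²` for `b ∈ A`. At the midpoint `x` of `a, b ∈ A`
it bounds the distance from `x` to `A` by `‖a - b‖² / (8 ε)`.

If `A` is the graph of a Lipschitz map `φ`, this says that `φ` preserves midpoints up to a quadratic
error. So `h ↦ φ (x + h) - φ x` is additive up to a quadratic error, and the limit of its dyadic
difference quotients is a linear map approximating it to second order, uniformly in `x`. Such
uniform first-order expansions force the derivative to be Lipschitz. -/

section NearestPoint

variable {X : Type*} [MetricSpace X] [ProperSpace X]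

theorem tendsto_of_dist_eq_infDist {ι : Type*} {l : Filter ι} {A : Set X} (hA : IsClosed A)
    {y q : X} (hq : ∀ b ∈ A, dist y b = infDist y A → b = q) {z p : ι → X}
    (hz : Tendsto z l (𝓝 y)) (hp : ∀ i, p i ∈ A) (hzp : ∀ i, dist (z i) (p i) = infDist (z i) A) :
    Tendsto p l (𝓝 q) := by
  have hdist : Tendsto (fun i => dist y (p i)) l (𝓝 (infDist y A)) := by
    have hupper : Tendsto (fun i => dist y (z i) + infDist (z i) A) l (𝓝 (infDist y A)) := by
      simpa using ((tendsto_const_nhds (x := y)).dist hz).add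
        (((continuous_infDist_pt A).tendsto y).comp hz)
    refine tendsto_of_tendsto_of_tendsto_of_le_of_le tendsto_const_nhds hupper
      (fun i => infDist_le_dist_of_mem (hp i)) fun i => ?_
    simpa only [hzp] using dist_triangle y (z i) (p i)
  refine (isCompact_closedBall y (infDist y A + 1)).tendsto_nhds_of_unique_mapClusterPt ?_ ?_
  · filter_upwards [hdist.eventually_le_const (lt_add_one _)] with i hi
    rwa [mem_closedBall, dist_comm]
  · intro b _ hb
    have hdb : ClusterPt (dist y b) (map (fun i => dist y (p i)) l) :=
      hb.continuousAt_comp (f := dist y) (by fun_prop)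
    exact hq b (hA.mem_of_mapClusterPt hb (.of_forall hp)) (eq_of_nhds_neBot (hdb.mono hdist))

theorem exists_mem_closedBall_add_mul_le {f : X → ℝ} (hf : Continuous f) {x : X} {ε c : ℝ}
    (hε : 0 ≤ ε) (hc : 0 ≤ c)
    (hslope : ∀ z ∈ ball x ε, f x ≤ f z → ∃ᶠ w in 𝓝 z, f z + c * dist w z < f w) :
    ∃ y ∈ closedBall x ε, f x + c * ε ≤ f y := by
  obtain ⟨z, hz, hmax⟩ := (isCompact_closedBall x ε).exists_isMaxOn ⟨x, mem_closedBall_self hε⟩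
    (by fun_prop : ContinuousOn (fun z => f z - c * dist z x) (closedBall x ε))
  have hxz : f x ≤ f z - c * dist z x := by
    simpa using isMaxOn_iff.1 hmax x (mem_closedBall_self hε)
  rcases (mem_closedBall.1 hz).lt_or_eq with hlt | heq
  · have hfz : f x ≤ f z := hxz.trans (sub_le_self _ (mul_nonneg hc dist_nonneg))
    obtain ⟨w, hw, hwball⟩ :=
      ((hslope z hlt hfz).and_eventually (isOpen_ball.mem_nhds hlt)).exists
    have hwz : f w - c * dist w x ≤ f z - c * dist z x :=
      isMaxOn_iff.1 hmax w (ball_subset_closedBall hwball)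
    have htri : c * dist w x ≤ c * (dist w z + dist z x) :=
      mul_le_mul_of_nonneg_left (dist_triangle w z x) hc
    linarith
  · exact ⟨z, hz, by rw [heq] at hxz; linarith⟩

theorem exists_mem_closedBall_add_le {f : X → ℝ} (hf : Continuous f) {x : X} {ε : ℝ} (hε : 0 ≤ ε)
    (hslope : ∀ z ∈ ball x ε, f x ≤ f z → ∀ c < 1, ∃ᶠ w in 𝓝 z, f z + c * dist w z < f w) :
    ∃ y ∈ closedBall x ε, f x + ε ≤ f y := by
  obtain ⟨y, hy, hmax⟩ := (isCompact_closedBall x ε).exists_isMaxOn ⟨x, mem_closedBall_self hε⟩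
    hf.continuousOn
  have hbound : ∀ c ∈ Ico (0 : ℝ) 1, f x + c * ε ≤ f y := fun c hc => by
    obtain ⟨z, hz, hxz⟩ := exists_mem_closedBall_add_mul_le hf hε hc.1
      fun w hw hxw => hslope w hw hxw c hc.2
    exact hxz.trans (isMaxOn_iff.1 hmax z hz)
  have hlim : Tendsto (fun c : ℝ => f x + c * ε) (𝓝[<] 1) (𝓝 (f x + 1 * ε)) :=
    (Continuous.tendsto (by fun_prop) 1).mono_left nhdsWithin_le_nhds
  refine ⟨y, hy, ?_⟩
  rw [one_mul] at hlim
  refine le_of_tendsto hlim ?_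
  filter_upwards [Ico_mem_nhdsLT (zero_lt_one' ℝ)] using hbound

end NearestPoint

section NormalInequality

theorem two_mul_inner_sub_le_of_norm_le {y p b : E} (h : ‖y - p‖ ≤ ‖y - b‖) :
    2 * ⟪y - p, b - p⟫ ≤ ‖b - p‖ ^ 2 := by
  have hexpand := norm_sub_sq_real (y - p) (b - p)
  rw [sub_sub_sub_cancel_right] at hexpand
  have hsq : ‖y - p‖ ^ 2 ≤ ‖y - b‖ ^ 2 := by gcongr
  linarith

variable [ProperSpace E] {A : Set E}

theorem UnpPt.frequently_infDist_add_lt {y : E} (hy : UnpPt A y) (hA : IsClosed A) (hyA : y ∉ A)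
    {c : ℝ} (hc : c < 1) : ∃ᶠ z in 𝓝 y, infDist y A + c * dist z y < infDist z A := by
  obtain ⟨q, ⟨hqA, -⟩, hunique⟩ := hy
  choose p hpA hp using fun z => hA.exists_infDist_eq_dist ⟨q, hqA⟩ z
  have hδ : 0 < ‖y - q‖ := norm_sub_pos_iff.2 fun h => hyA (h ▸ hqA)
  have hline : Tendsto (fun t : ℝ => y + t • (y - q)) (𝓝[>] 0) (𝓝 y) := by
    have hcont : Continuous fun t : ℝ => y + t • (y - q) := by fun_prop
    simpa using (hcont.tendsto 0).mono_left nhdsWithin_le_nhds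
  have hproj : Tendsto (fun t : ℝ => p (y + t • (y - q))) (𝓝[>] 0) (𝓝 q) :=
    tendsto_of_dist_eq_infDist hA (fun b hb hyb => hunique b ⟨hb, hyb⟩) hline
      (fun _ => hpA _) fun _ => (hp _).symm
  have hangle : ∀ᶠ b in 𝓝 q, c * ‖y - q‖ * ‖y - b‖ < ⟪y - q, y - b⟫ := by
    refine ContinuousAt.eventually_lt (by fun_prop) (by fun_prop) ?_
    rw [real_inner_self_eq_norm_mul_norm]
    nlinarith [mul_pos hδ hδ]
  refine hline.frequently (Eventually.frequently ?_)
  filter_upwards [hproj.eventually hangle, self_mem_nhdsWithin] with t hangle_t (ht : 0 < t)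
  set z := y + t • (y - q)
  have hyp : infDist y A ≤ ‖y - p z‖ := dist_eq_norm y (p z) ▸ infDist_le_dist_of_mem (hpA z)
  have hyp_pos : 0 < ‖y - p z‖ := norm_sub_pos_iff.2 fun h => hyA (h ▸ hpA z)
  have hzy : dist z y = t * ‖y - q‖ := by simp [z, norm_smul, abs_of_pos ht]
  have hinner : ⟪z - p z, y - p z⟫ = ‖y - p z‖ ^ 2 + t * ⟪y - q, y - p z⟫ := by
    rw [show z - p z = (y - p z) + t • (y - q) by simp only [z]; abel, inner_add_left,
      real_inner_smul_left, real_inner_self_eq_norm_sq]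
  have hcs : (‖y - p z‖ + c * (t * ‖y - q‖)) * ‖y - p z‖ < ‖z - p z‖ * ‖y - p z‖ := by
    have := mul_lt_mul_of_pos_left hangle_t ht
    linarith [real_inner_le_norm (z - p z) (y - p z)]
  rw [hp z, dist_eq_norm z (p z), hzy]
  linarith [lt_of_mul_lt_mul_right hcs hyp_pos.le]

theorem exists_sameRay_of_forall_unpPt (hA : IsClosed A) {x p : E} {ε : ℝ} (hε : 0 ≤ ε)
    (hU : ∀ z ∈ ball x ε, UnpPt A z) (hxA : x ∉ A) (hp : p ∈ A) (hxp : dist x p = infDist x A) :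
    ∃ y, SameRay ℝ (x - p) (y - p) ∧ ‖y - p‖ = ‖x - p‖ + ε ∧ ∀ b ∈ A, ‖y - p‖ ≤ ‖y - b‖ := by
  have hx_pos : 0 < infDist x A := (hA.notMem_iff_infDist_pos ⟨p, hp⟩).1 hxA
  obtain ⟨y, hyx, hy⟩ := exists_mem_closedBall_add_le (continuous_infDist_pt A) hε
    fun z hz hxz _ => (hU z hz).frequently_infDist_add_lt hA
      ((hA.notMem_iff_infDist_pos ⟨p, hp⟩).2 (hx_pos.trans_le hxz))
  simp only [mem_closedBall, dist_eq_norm] at hyx hxp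
  have hyb : ∀ b ∈ A, ‖x - p‖ + ε ≤ ‖y - b‖ := fun b hb => by
    rw [hxp, ← dist_eq_norm y b]
    exact hy.trans (infDist_le_dist_of_mem hb)
  have hsum : x - p + (y - x) = y - p := by abel
  have htri : ‖y - p‖ ≤ ‖x - p‖ + ‖y - x‖ := hsum ▸ norm_add_le _ _
  have hyp : ‖y - p‖ = ‖x - p‖ + ε := by linarith [hyb p hp]
  have hray : SameRay ℝ (x - p) (y - x) :=
    sameRay_iff_norm_add.2 (by rw [hsum]; linarith)
  exact ⟨y, hsum ▸ SameRay.rfl.add_right hray, hyp, fun b hb => hyp ▸ hyb b hb⟩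

theorem two_mul_inner_sub_le_of_forall_unpPt (hA : IsClosed A) {x p b : E} {ε : ℝ} (hε : 0 ≤ ε)
    (hU : ∀ z ∈ ball x ε, UnpPt A z) (hp : p ∈ A) (hxp : dist x p = infDist x A) (hb : b ∈ A) :
    2 * (‖x - p‖ + ε) * ⟪x - p, b - p⟫ ≤ ‖x - p‖ * ‖b - p‖ ^ 2 := by
  by_cases hxA : x ∈ A
  · rw [infDist_zero_of_mem hxA, dist_eq_zero] at hxp
    simp [hxp]
  obtain ⟨y, hray, hyp, hy⟩ := exists_sameRay_of_forall_unpPt hA hε hU hxA hp hxp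
  calc 2 * (‖x - p‖ + ε) * ⟪x - p, b - p⟫
      = 2 * ⟪‖y - p‖ • (x - p), b - p⟫ := by rw [real_inner_smul_left, hyp]; ring
    _ = ‖x - p‖ * (2 * ⟪y - p, b - p⟫) := by
      rw [← hray.norm_smul_eq, real_inner_smul_left]; ring
    _ ≤ ‖x - p‖ * ‖b - p‖ ^ 2 := by
      gcongr
      exact two_mul_inner_sub_le_of_norm_le (hy b hb)

theorem mul_infDist_midpoint_le (hA : IsClosed A) {a b : E} (ha : a ∈ A) (hb : b ∈ A) {ε : ℝ}
    (hε : 0 ≤ ε) (hU : ∀ z ∈ ball (midpoint ℝ a b) ε, UnpPt A z) :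
    8 * ε * infDist (midpoint ℝ a b) A ≤ dist a b ^ 2 := by
  set m := midpoint ℝ a b with hm
  obtain ⟨p, hp, hmp⟩ := hA.exists_infDist_eq_dist ⟨a, ha⟩ m
  have hna := two_mul_inner_sub_le_of_forall_unpPt hA hε hU hp hmp.symm ha
  have hnb := two_mul_inner_sub_le_of_forall_unpPt hA hε hU hp hmp.symm hb
  have hsum : (a - p) + (b - p) = (2 : ℝ) • (m - p) := by
    rw [hm, midpoint_eq_smul_add, invOf_eq_inv]; module
  have hinner : ⟪m - p, a - p⟫ + ⟪m - p, b - p⟫ = 2 * ‖m - p‖ ^ 2 := by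
    rw [← inner_add_right, hsum, real_inner_smul_right, real_inner_self_eq_norm_sq]
  have hpar := parallelogram_law_with_norm ℝ (a - p) (b - p)
  rw [hsum, sub_sub_sub_cancel_right, norm_smul, Real.norm_ofNat] at hpar
  rw [hmp, dist_eq_norm, dist_eq_norm]
  rcases (norm_nonneg (m - p)).eq_or_lt with h0 | hpos
  · rw [← h0]; nlinarith [sq_nonneg ‖a - b‖]
  · refine le_of_mul_le_mul_left ?_ hpos
    nlinarith [pow_pos hpos 3]

end NormalInequality

section Reach

variable {G : Type*} [NormedAddCommGroup G] {A : Set G} {a : G} {R : ℝ}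

theorem exists_forall_unpPt_of_locReach_pos (h : 0 < locReach A a) :
    ∃ R > 0, ∀ x ∈ ball a R, UnpPt A x := by
  obtain ⟨R, hR⟩ := lt_iSup_iff.1 h
  obtain ⟨hU, hR_pos⟩ := lt_iSup_iff.1 hR
  exact ⟨R, by exact_mod_cast hR_pos, hU⟩

theorem mem_of_mem_closure_of_forall_unpPt (hU : ∀ x ∈ ball a R, UnpPt A x) {x : G}
    (hx : x ∈ closure A) (hxa : x ∈ ball a R) : x ∈ A := by
  obtain ⟨q, ⟨hq, hxq⟩, -⟩ := hU x hxa
  rw [← infDist_closure, infDist_zero_of_mem hx, dist_eq_zero] at hxq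
  exact hxq ▸ hq

theorem unpPt_closure_of_forall_unpPt (ha : a ∈ A) (hU : ∀ x ∈ ball a R, UnpPt A x) {x : G}
    (hx : x ∈ ball a (R / 2)) : UnpPt (closure A) x := by
  rw [mem_ball] at hx
  obtain ⟨q, ⟨hq, hxq⟩, hunique⟩ := hU x (mem_ball.2 (by linarith [dist_nonneg (x := x) (y := a)]))
  refine ⟨q, ⟨subset_closure hq, by rwa [infDist_closure]⟩, fun b ⟨hb, hxb⟩ => ?_⟩
  rw [infDist_closure] at hxb
  have hba : dist b a < R := by
    linarith [dist_triangle_left b a x, infDist_le_dist_of_mem (x := x) ha]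
  exact hunique b ⟨mem_of_mem_closure_of_forall_unpPt hU hb hba, hxb⟩

theorem exists_dist_midpoint_le_of_locReach_pos [ProperSpace E] {A : Set E} {a : E} (ha : a ∈ A)
    (h : 0 < locReach A a) {O : Set E} (hO : O ∈ 𝓝 a) :
    ∃ C : ℝ≥0, ∃ τ > 0, ∀ x ∈ A ∩ ball a τ, ∀ y ∈ A ∩ ball a τ,
      ∃ p ∈ A ∩ O, dist (midpoint ℝ x y) p ≤ C * dist x y ^ 2 := by
  obtain ⟨R, hR, hU⟩ := exists_forall_unpPt_of_locReach_pos h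
  obtain ⟨ρ, hρ, hρO⟩ := Metric.mem_nhds_iff.1 hO
  refine ⟨(1 / (2 * R)).toNNReal, min (R / 4) (ρ / 2), by positivity, fun x hx y hy => ?_⟩
  have hma : dist (midpoint ℝ x y) a < min (R / 4) (ρ / 2) :=
    (convex_ball a _).midpoint_mem hx.2 hy.2
  set m := midpoint ℝ x y
  obtain ⟨hmR, hmρ⟩ := lt_min_iff.1 hma
  obtain ⟨p, hp, hmp⟩ := isClosed_closure.exists_infDist_eq_dist ⟨a, subset_closure ha⟩ m
  have hpa : dist p a ≤ 2 * dist m a := by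
    linarith [dist_triangle_left p a m, infDist_le_dist_of_mem (x := m) (subset_closure ha)]
  have hpA : p ∈ A := mem_of_mem_closure_of_forall_unpPt hU hp (mem_ball.2 (by linarith))
  refine ⟨p, ⟨hpA, hρO (mem_ball.2 (by linarith))⟩, ?_⟩
  have hmid : 8 * (R / 4) * infDist m (closure A) ≤ dist x y ^ 2 :=
    mul_infDist_midpoint_le isClosed_closure (subset_closure hx.1) (subset_closure hy.1)
      (by positivity) fun z hz => unpPt_closure_of_forall_unpPt ha hU <|
        ball_subset_ball' (by linarith) hz
  rw [Real.coe_toNNReal _ (by positivity), one_div_mul_eq_div, le_div_iff₀ (by positivity), ← hmp]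
  linarith

end Reach

section ApproxAdditive

variable {V F : Type*} [NormedAddCommGroup V] [NormedSpace ℝ V] [NormedAddCommGroup F]
  [NormedSpace ℝ F] {u : V → F} {ρ C : ℝ}

/-- The difference quotient `(u (t h) - u 0) / t` at dyadic scale `t = 2⁻ⁿ`, for maps `u` with
`u 0 = 0`. Its limit is the derivative of `u` at `0` in the direction `h`. -/
def dyadicQuotient (u : V → F) (n : ℕ) (h : V) : F := (2 : ℝ) ^ n • u (((2 : ℝ) ^ n)⁻¹ • h)

theorem dyadicQuotient_succ (u : V → F) (n : ℕ) (h : V) :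
    dyadicQuotient u (n + 1) h = (2 : ℝ) • dyadicQuotient u n ((2⁻¹ : ℝ) • h) := by
  simp only [dyadicQuotient, smul_smul, pow_succ', mul_inv_rev]

theorem norm_dyadicQuotient_add_sub_le
    (hu : ∀ h k, ‖h‖ + ‖k‖ < ρ → ‖u (h + k) - u h - u k‖ ≤ C * (‖h‖ + ‖k‖) ^ 2) {h k : V} {n : ℕ}
    (hhk : ‖h‖ + ‖k‖ < 2 ^ n * ρ) :
    ‖dyadicQuotient u n (h + k) - dyadicQuotient u n h - dyadicQuotient u n k‖ ≤
      C * (‖h‖ + ‖k‖) ^ 2 / 2 ^ n := by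
  have hnorm : ∀ h : V, ‖((2 : ℝ) ^ n)⁻¹ • h‖ = ‖h‖ / 2 ^ n := fun h => by
    rw [norm_smul, norm_inv, norm_pow, Real.norm_ofNat, div_eq_inv_mul]
  have hscaled := hu (((2 : ℝ) ^ n)⁻¹ • h) (((2 : ℝ) ^ n)⁻¹ • k) (by
    rwa [hnorm, hnorm, ← add_div, div_lt_iff₀' (by positivity)])
  rw [hnorm, hnorm, ← smul_add, ← add_div] at hscaled
  simp only [dyadicQuotient, ← smul_sub]
  rw [norm_smul, norm_pow, Real.norm_ofNat]
  calc (2 : ℝ) ^ n * _ ≤ 2 ^ n * (C * ((‖h‖ + ‖k‖) / 2 ^ n) ^ 2) := by gcongr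
    _ = C * (‖h‖ + ‖k‖) ^ 2 / 2 ^ n := by field_simp

theorem dist_dyadicQuotient_succ_le
    (hu : ∀ h k, ‖h‖ + ‖k‖ < ρ → ‖u (h + k) - u h - u k‖ ≤ C * (‖h‖ + ‖k‖) ^ 2) {h : V} {n : ℕ}
    (hh : ‖h‖ < 2 ^ n * ρ) :
    dist (dyadicQuotient u n h) (dyadicQuotient u (n + 1) h) ≤ C * ‖h‖ ^ 2 / 2 ^ n := by
  have hhalf : ‖(2⁻¹ : ℝ) • h‖ + ‖(2⁻¹ : ℝ) • h‖ = ‖h‖ := by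
    rw [norm_smul, norm_inv, Real.norm_ofNat]; ring
  have hsplit : (2⁻¹ : ℝ) • h + (2⁻¹ : ℝ) • h = h := by module
  have hadd := norm_dyadicQuotient_add_sub_le hu (n := n) (hhalf.trans_lt hh)
  rwa [hhalf, hsplit, sub_sub, ← two_smul ℝ, ← dyadicQuotient_succ, ← dist_eq_norm] at hadd

theorem eventually_lt_two_pow_mul (hρ : 0 < ρ) (x : ℝ) : ∀ᶠ n : ℕ in atTop, x < 2 ^ n * ρ :=
  ((tendsto_pow_atTop_atTop_of_one_lt one_lt_two).atTop_mul_const hρ).eventually_gt_atTop x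

theorem exists_tendsto_dyadicQuotient [CompleteSpace F] (hρ : 0 < ρ)
    (hu : ∀ h k, ‖h‖ + ‖k‖ < ρ → ‖u (h + k) - u h - u k‖ ≤ C * (‖h‖ + ‖k‖) ^ 2) (h : V) :
    ∃ l, Tendsto (fun n => dyadicQuotient u n h) atTop (𝓝 l) := by
  refine cauchySeq_tendsto_of_complete (cauchySeq_of_summable_dist ?_)
  have hgeom : Summable fun n : ℕ => C * ‖h‖ ^ 2 / 2 ^ n := by
    simpa only [div_eq_mul_inv, inv_pow] using
      (summable_geometric_of_lt_one (by norm_num) (by norm_num : (2⁻¹ : ℝ) < 1)).mul_left _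
  refine hgeom.of_norm_bounded_eventually_nat ?_
  filter_upwards [eventually_lt_two_pow_mul hρ ‖h‖] with n hn
  simpa only [Real.norm_of_nonneg dist_nonneg] using dist_dyadicQuotient_succ_le hu hn

theorem add_of_tendsto_dyadicQuotient (hρ : 0 < ρ)
    (hu : ∀ h k, ‖h‖ + ‖k‖ < ρ → ‖u (h + k) - u h - u k‖ ≤ C * (‖h‖ + ‖k‖) ^ 2) {G : V → F}
    (hG : ∀ h, Tendsto (fun n => dyadicQuotient u n h) atTop (𝓝 (G h))) (h k : V) :
    G (h + k) = G h + G k := by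
  have hbound : Tendsto (fun n : ℕ => C * (‖h‖ + ‖k‖) ^ 2 / 2 ^ n) atTop (𝓝 0) :=
    tendsto_const_nhds.div_atTop (tendsto_pow_atTop_atTop_of_one_lt one_lt_two)
  have hzero : Tendsto (fun n => dyadicQuotient u n (h + k) - dyadicQuotient u n h -
      dyadicQuotient u n k) atTop (𝓝 0) := by
    refine squeeze_zero_norm' ?_ hbound
    filter_upwards [eventually_lt_two_pow_mul hρ (‖h‖ + ‖k‖)] with n hn
    exact norm_dyadicQuotient_add_sub_le hu hn
  have := tendsto_nhds_unique (((hG (h + k)).sub (hG h)).sub (hG k)) hzero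
  rwa [sub_sub, sub_eq_zero] at this

/- Hyers' stability argument: the dyadic limit of an approximately additive map is additive. -/
theorem exists_continuousLinearMap_norm_sub_le [CompleteSpace F] (hρ : 0 < ρ)
    (hcont : ContinuousAt u 0)
    (hu : ∀ h k, ‖h‖ + ‖k‖ < ρ → ‖u (h + k) - u h - u k‖ ≤ C * (‖h‖ + ‖k‖) ^ 2) :
    ∃ L : V →L[ℝ] F, ∀ h, ‖h‖ < ρ → ‖u h - L h‖ ≤ 2 * C * ‖h‖ ^ 2 := by
  choose G hG using exists_tendsto_dyadicQuotient hρ hu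
  have herr : ∀ h, ‖h‖ < ρ → ‖u h - G h‖ ≤ 2 * C * ‖h‖ ^ 2 := fun h hh => by
    have hstep : ∀ n, dist (dyadicQuotient u n h) (dyadicQuotient u (n + 1) h) ≤
        2 * C * ‖h‖ ^ 2 / 2 / 2 ^ n := fun n => by
      rw [mul_assoc 2, mul_div_cancel_left₀ _ (two_ne_zero' ℝ)]
      exact dist_dyadicQuotient_succ_le hu
        (hh.trans_le (le_mul_of_one_le_left hρ.le (one_le_pow₀ one_le_two)))
    simpa [dyadicQuotient, dist_eq_norm] using
      dist_le_of_le_geometric_two_of_tendsto₀ hstep (hG h)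
  let Gadd : V →+ F := AddMonoidHom.mk' G (add_of_tendsto_dyadicQuotient hρ hu hG)
  have hu0 : u 0 = 0 := by simpa using hu 0 0 (by simpa using hρ)
  have hGcont : Continuous Gadd := by
    refine continuous_of_continuousAt_zero Gadd ?_
    have hbound : Tendsto (fun h : V => 2 * C * ‖h‖ ^ 2) (𝓝 0) (𝓝 0) := by
      simpa using (Continuous.tendsto (by fun_prop) (0 : V) :
        Tendsto (fun h : V => 2 * C * ‖h‖ ^ 2) (𝓝 0) _)
    have hdiff : Tendsto (fun h => u h - G h) (𝓝 0) (𝓝 0) :=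
      squeeze_zero_norm' ((eventually_norm_sub_lt 0 hρ).mono fun h hh => herr h (by simpa using hh))
        hbound
    have hG0 : Tendsto G (𝓝 0) (𝓝 0) := by
      simpa only [hu0, sub_zero, sub_sub_cancel] using hcont.tendsto.sub hdiff
    rw [ContinuousAt, map_zero]
    exact hG0
  exact ⟨Gadd.toRealLinearMap hGcont, herr⟩

end ApproxAdditive

section QuadraticRemainder

variable {V F : Type*} [NormedAddCommGroup V] [NormedSpace ℝ V] [NormedAddCommGroup F]
  [NormedSpace ℝ F] {f : V → F} {ρ M : ℝ}

theorem hasFDerivAt_of_norm_sub_le_sq {L : V →L[ℝ] F} {x : V} (hρ : 0 < ρ)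
    (hL : ∀ h, ‖h‖ < ρ → ‖f (x + h) - f x - L h‖ ≤ M * ‖h‖ ^ 2) : HasFDerivAt f L x := by
  rw [hasFDerivAt_iff_isLittleO_nhds_zero]
  have hbigO : (fun h => f (x + h) - f x - L h) =O[𝓝 0] fun h : V => ‖h‖ ^ 2 := by
    refine .of_bound M ?_
    filter_upwards [ball_mem_nhds (0 : V) hρ] with h hh
    simpa using hL h (mem_ball_zero_iff.1 hh)
  exact hbigO.trans_isLittleO (Asymptotics.isLittleO_norm_pow_id one_lt_two)

/- Testing on a vector `h` as long as `x - y`, expand `f (x + h) = f (y + (x - y + h))` at both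
base points and `f x` at `y`. -/
theorem norm_sub_le_of_norm_sub_le_sq {Lx Ly : V →L[ℝ] F} {x y : V}
    (hLx : ∀ h, ‖h‖ < ρ → ‖f (x + h) - f x - Lx h‖ ≤ M * ‖h‖ ^ 2)
    (hLy : ∀ h, ‖h‖ < ρ → ‖f (y + h) - f y - Ly h‖ ≤ M * ‖h‖ ^ 2) (hM : 0 ≤ M)
    (hxy : 2 * ‖x - y‖ < ρ) : ‖Lx - Ly‖ ≤ 6 * M * ‖x - y‖ := by
  rcases eq_or_ne x y with rfl | hne
  · have hρ : 0 < ρ := by simpa using hxy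
    simp [(hasFDerivAt_of_norm_sub_le_sq hρ hLx).unique (hasFDerivAt_of_norm_sub_le_sq hρ hLy)]
  have hpos : 0 < ‖x - y‖ := norm_sub_pos_iff.2 hne
  refine ContinuousLinearMap.opNorm_le_of_unit_norm (by positivity) fun e he => ?_
  set h := ‖x - y‖ • e with hh
  have hnorm : ‖h‖ = ‖x - y‖ := by rw [hh, norm_smul, he, norm_norm, mul_one]
  have hnorm_add : ‖x - y + h‖ ≤ 2 * ‖x - y‖ := by linarith [norm_add_le (x - y) h]
  have hx := hLx h (by linarith)
  have hy := hLy (x - y) (by linarith)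
  have hyh := hLy (x - y + h) (by linarith)
  rw [add_sub_cancel] at hy
  rw [← add_assoc, add_sub_cancel, map_add] at hyh
  have hbound : ‖(Lx - Ly) h‖ ≤ 6 * M * ‖x - y‖ ^ 2 := calc
    ‖(Lx - Ly) h‖ = ‖(f (x + h) - f y - (Ly (x - y) + Ly h)) - (f x - f y - Ly (x - y)) -
        (f (x + h) - f x - Lx h)‖ := by
      rw [sub_apply]; congr 1; abel
    _ ≤ M * ‖x - y + h‖ ^ 2 + M * ‖x - y‖ ^ 2 + M * ‖h‖ ^ 2 :=
      (norm_sub_le _ _).trans (add_le_add ((norm_sub_le _ _).trans (add_le_add hyh hy)) hx)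
    _ ≤ M * (2 * ‖x - y‖) ^ 2 + M * ‖x - y‖ ^ 2 + M * ‖x - y‖ ^ 2 := by rw [hnorm]; gcongr
    _ = 6 * M * ‖x - y‖ ^ 2 := by ring
  rw [hh, map_smul, norm_smul, norm_norm] at hbound
  exact le_of_mul_le_mul_left (hbound.trans_eq (by ring)) hpos

end QuadraticRemainder

section MidpointAffine

variable {V F : Type*} [NormedAddCommGroup V] [NormedSpace ℝ V] [NormedAddCommGroup F]
  [NormedSpace ℝ F] {f : V → F} {C : ℝ≥0}

/- Both `f (x + (h + k)) + f x` and `f (x + h) + f (x + k)` are close to `2 f (x + (h + k) / 2)`. -/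
theorem norm_sub_sub_le_of_dist_midpoint_le {c : V} {r : ℝ}
    (hf : ∀ x ∈ ball c r, ∀ y ∈ ball c r,
      dist (f (midpoint ℝ x y)) (midpoint ℝ (f x) (f y)) ≤ C * dist x y ^ 2) {x h k : V}
    (hx : dist x c + (‖h‖ + ‖k‖) < r) :
    ‖(f (x + (h + k)) - f x) - (f (x + h) - f x) - (f (x + k) - f x)‖ ≤
      4 * C * (‖h‖ + ‖k‖) ^ 2 := by
  have hmem : ∀ v : V, ‖v‖ ≤ ‖h‖ + ‖k‖ → x + v ∈ ball c r := fun v hv => by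
    rw [mem_ball]
    linarith [dist_triangle (x + v) x c, dist_self_add_left v x]
  have hx0 : x ∈ ball c r := by simpa using hmem 0 (by simpa using by positivity)
  have hfar := hf _ (hmem (h + k) (norm_add_le h k)) x hx0
  have hnear := hf _ (hmem h (by simp)) _ (hmem k (by simp))
  have hmid : midpoint ℝ (x + h) (x + k) = midpoint ℝ (x + (h + k)) x := by
    simp only [midpoint_eq_smul_add, invOf_eq_inv]; module
  rw [hmid, dist_add_left, dist_eq_norm h k] at hnear
  rw [dist_self_add_left] at hfar
  calc ‖(f (x + (h + k)) - f x) - (f (x + h) - f x) - (f (x + k) - f x)‖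
      = 2 * dist (midpoint ℝ (f (x + (h + k))) (f x)) (midpoint ℝ (f (x + h)) (f (x + k))) := by
        rw [dist_eq_norm, ← Real.norm_ofNat, ← norm_smul]
        congr 1
        simp only [midpoint_eq_smul_add, invOf_eq_inv]; module
    _ ≤ 2 * (C * ‖h + k‖ ^ 2 + C * ‖h - k‖ ^ 2) := by
        gcongr
        exact (dist_triangle_left _ _ _).trans (add_le_add hfar hnear)
    _ ≤ 2 * (C * (‖h‖ + ‖k‖) ^ 2 + C * (‖h‖ + ‖k‖) ^ 2) := by
        gcongr
        · exact norm_add_le h k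
        · exact norm_sub_le h k
    _ = 4 * C * (‖h‖ + ‖k‖) ^ 2 := by ring

theorem exists_hasFDerivAt_lipschitzOnWith_of_dist_midpoint_le [CompleteSpace F] {c : V} {r : ℝ}
    (hcont : ContinuousOn f (ball c r))
    (hf : ∀ x ∈ ball c r, ∀ y ∈ ball c r,
      dist (f (midpoint ℝ x y)) (midpoint ℝ (f x) (f y)) ≤ C * dist x y ^ 2) :
    ∃ g : V → V →L[ℝ] F, (∀ x ∈ ball c (r / 8), HasFDerivAt f (g x) x) ∧
      LipschitzOnWith (48 * C) g (ball c (r / 8)) := by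
  have hTaylor : ∀ x ∈ ball c (r / 8), ∃ L : V →L[ℝ] F, ∀ h, ‖h‖ < r / 2 →
      ‖f (x + h) - f x - L h‖ ≤ 8 * C * ‖h‖ ^ 2 := fun x hx => by
    rw [mem_ball] at hx
    have hr : 0 < r / 8 := dist_nonneg.trans_lt hx
    have hcont_x : ContinuousAt f (x + 0) := by
      rw [add_zero]
      exact hcont.continuousAt (isOpen_ball.mem_nhds (mem_ball.2 (by linarith)))
    obtain ⟨L, hL⟩ := exists_continuousLinearMap_norm_sub_le (u := fun h => f (x + h) - f x)
      (ρ := r / 2) (by linarith) ((hcont_x.comp (by fun_prop)).sub continuousAt_const)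
      fun h k hhk => norm_sub_sub_le_of_dist_midpoint_le hf (by linarith)
    exact ⟨L, fun h hh => (hL h hh).trans_eq (by ring)⟩
  choose! g hg using hTaylor
  refine ⟨g, fun x hx => hasFDerivAt_of_norm_sub_le_sq ?_ (hg x hx),
    .of_dist_le_mul fun x hx y hy => ?_⟩
  · linarith [dist_nonneg.trans_lt (mem_ball.1 hx)]
  · rw [mem_ball] at hx hy
    have hxy : 2 * ‖x - y‖ < r / 2 := by
      linarith [dist_eq_norm x y, dist_triangle_right x y c]
    simpa [dist_eq_norm, ← mul_assoc, show (6 : ℝ) * 8 = 48 by norm_num] using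
      norm_sub_le_of_norm_sub_le_sq (hg x hx) (hg y hy) (by positivity) hxy

end MidpointAffine

section OrthogonalGraph

variable {W : Submodule ℝ E} {φ : W → Wᗮ} {S : Set W} {K : ℝ≥0}

/-- The graph over `S` of a map from a subspace `W` to its orthogonal complement, as a subset of
the ambient space. -/
def orthogonalGraph (φ : W → Wᗮ) (S : Set W) : Set E := {x | ∃ w ∈ S, x = (w : E) + (φ w : E)}

theorem norm_coe_add_coe_mul_self (u : W) (v : Wᗮ) :
    ‖(u : E) + (v : E)‖ * ‖(u : E) + (v : E)‖ = ‖u‖ * ‖u‖ + ‖v‖ * ‖v‖ :=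
  norm_add_sq_eq_norm_sq_add_norm_sq_real (Submodule.inner_right_of_mem_orthogonal u.2 v.2)

theorem dist_le_mul_dist_of_lipschitzOnWith (hφ : LipschitzOnWith K φ S) {w w' : W} (hw : w ∈ S)
    (hw' : w' ∈ S) (v : Wᗮ) :
    dist v (φ w) ≤ (1 + K) * dist ((w : E) + (v : E)) ((w' : E) + (φ w' : E)) := by
  have hsplit : dist ((w : E) + (v : E)) ((w' : E) + (φ w' : E)) =
      ‖((w - w' : W) : E) + ((v - φ w' : Wᗮ) : E)‖ := by
    rw [dist_eq_norm, add_sub_add_comm, Submodule.coe_sub, Submodule.coe_sub]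
  have hpyth := norm_coe_add_coe_mul_self (w - w') (v - φ w')
  rw [← hsplit, ← dist_eq_norm, ← dist_eq_norm] at hpyth
  set D := dist ((w : E) + (v : E)) ((w' : E) + (φ w' : E))
  have hhor : dist w w' ≤ D := abs_le_of_sq_le_sq' (by nlinarith) dist_nonneg |>.2
  have hver : dist v (φ w') ≤ D := abs_le_of_sq_le_sq' (by nlinarith) dist_nonneg |>.2
  calc dist v (φ w) ≤ dist v (φ w') + dist (φ w) (φ w') := dist_triangle_right _ _ _
    _ ≤ D + K * D := add_le_add hver
      ((hφ.dist_le_mul w hw w' hw').trans (mul_le_mul_of_nonneg_left hhor K.2))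
    _ = (1 + K) * D := by ring

theorem dist_coe_add_coe_le_of_lipschitzOnWith (hφ : LipschitzOnWith K φ S) {u v : W} (hu : u ∈ S)
    (hv : v ∈ S) :
    dist ((u : E) + (φ u : E)) ((v : E) + (φ v : E)) ≤ (1 + K) * dist u v := calc
  _ ≤ dist u v + dist (φ u) (φ v) := dist_add_add_le _ _ _ _
  _ ≤ (1 + K) * dist u v := by linarith [hφ.dist_le_mul u hu v hv]

theorem orthogonalGraph_inter_preimage [W.HasOrthogonalProjection] (φ : W → Wᗮ) (S T : Set W) :
    orthogonalGraph φ S ∩ W.orthogonalProjectionOnto ⁻¹' T = orthogonalGraph φ (S ∩ T) := by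
  have hproj : ∀ w : W, W.orthogonalProjectionOnto ((w : E) + (φ w : E)) = w := fun w => by
    rw [map_add, Submodule.orthogonalProjectionOnto_mem_subspace_eq_self,
      Submodule.orthogonalProjectionOnto_eq_zero_iff.2 (φ w).2, add_zero]
  ext x
  constructor
  · rintro ⟨⟨w, hwS, rfl⟩, hwT⟩
    exact ⟨w, ⟨hwS, by rwa [mem_preimage, hproj] at hwT⟩, rfl⟩
  · rintro ⟨w, ⟨hwS, hwT⟩, rfl⟩
    exact ⟨⟨w, hwS, rfl⟩, by rwa [mem_preimage, hproj]⟩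

theorem exists_ball_dist_midpoint_le_of_orthogonalGraph [ProperSpace E] {A O : Set E} {w₀ : W}
    (hw₀ : w₀ ∈ S) (hreach : 0 < locReach A ((w₀ : E) + (φ w₀ : E))) (hS : IsOpen S)
    (hφ : LipschitzOnWith K φ S) (hO : IsOpen O) (hgraph : orthogonalGraph φ S = A ∩ O) :
    ∃ r > 0, ball w₀ r ⊆ S ∧ ∃ C : ℝ≥0, ∀ u ∈ ball w₀ r, ∀ v ∈ ball w₀ r,
      dist (φ (midpoint ℝ u v)) (midpoint ℝ (φ u) (φ v)) ≤ C * dist u v ^ 2 := by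
  have hmem : ∀ w ∈ S, (w : E) + (φ w : E) ∈ A ∩ O := fun w hw => hgraph ▸ ⟨w, hw, rfl⟩
  obtain ⟨ha, haO⟩ := hmem w₀ hw₀
  obtain ⟨C, τ, hτ, hmid⟩ := exists_dist_midpoint_le_of_locReach_pos ha hreach (hO.mem_nhds haO)
  obtain ⟨r, hr, hrS⟩ := Metric.isOpen_iff.1 hS w₀ hw₀
  have hnear : ∀ w ∈ ball w₀ (min r (τ / (1 + K))),
      w ∈ S ∧ (w : E) + (φ w : E) ∈ A ∩ ball ((w₀ : E) + (φ w₀ : E)) τ := fun w hw => by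
    obtain ⟨hwr, hwτ⟩ := lt_min_iff.1 (mem_ball.1 hw)
    have hwS : w ∈ S := hrS hwr
    refine ⟨hwS, (hmem w hwS).1, ?_⟩
    rw [lt_div_iff₀' (by positivity)] at hwτ
    exact (dist_coe_add_coe_le_of_lipschitzOnWith hφ hwS hw₀).trans_lt hwτ
  refine ⟨min r (τ / (1 + K)), by positivity, fun w hw => (hnear w hw).1,
    (1 + K) * (C * (1 + K) ^ 2), fun u hu v hv => ?_⟩
  obtain ⟨p, hp, hdist⟩ := hmid _ (hnear u hu).2 _ (hnear v hv).2
  obtain ⟨w, hw, rfl⟩ : p ∈ orthogonalGraph φ S := hgraph ▸ hp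
  have hmidpoint : midpoint ℝ ((u : E) + (φ u : E)) ((v : E) + (φ v : E)) =
      (midpoint ℝ u v : W) + (midpoint ℝ (φ u) (φ v) : Wᗮ) := by
    simp only [midpoint_eq_smul_add, Submodule.coe_smul, Submodule.coe_add]; module
  have hmidS : midpoint ℝ u v ∈ S := (hnear _ ((convex_ball w₀ _).midpoint_mem hu hv)).1
  rw [hmidpoint] at hdist
  rw [dist_comm]
  calc dist (midpoint ℝ (φ u) (φ v)) (φ (midpoint ℝ u v))
      ≤ (1 + K) * dist ((midpoint ℝ u v : E) + (midpoint ℝ (φ u) (φ v) : Wᗮ)) (w + φ w) :=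
        dist_le_mul_dist_of_lipschitzOnWith hφ hmidS hw _
    _ ≤ (1 + K) * (C * ((1 + K) * dist u v) ^ 2) := by
        gcongr
        refine hdist.trans ?_
        gcongr
        exact dist_coe_add_coe_le_of_lipschitzOnWith hφ (hnear u hu).1 (hnear v hv).1
    _ = ((1 + K) * (C * (1 + K) ^ 2) : ℝ≥0) * dist u v ^ 2 := by push_cast; ring

end OrthogonalGraph

theorem stmt14_general [FiniteDimensional ℝ E] {A : Set E} {a : E} (ha : a ∈ A)
    (hreach : 0 < locReach A a) {W : Submodule ℝ E} {φ : W → Wᗮ} {S : Set W} {K : ℝ≥0}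
    (hS : IsOpen S) (hφ : LipschitzOnWith K φ S) {O : Set E} (hO : IsOpen O) (haO : a ∈ O)
    (hgraph : orthogonalGraph φ S = A ∩ O) :
    ∃ (c : W) (r : ℝ) (g : W → W →L[ℝ] Wᗮ), 0 < r ∧
      (∀ w ∈ ball c r, HasFDerivAt φ (g w) w) ∧
      (∃ C : ℝ≥0, LipschitzOnWith C g (ball c r)) ∧
      ∃ O' : Set E, IsOpen O' ∧ a ∈ O' ∧ orthogonalGraph φ (ball c r) = A ∩ O' := by
  obtain ⟨w₀, hw₀, rfl⟩ : a ∈ orthogonalGraph φ S := hgraph ▸ ⟨ha, haO⟩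
  obtain ⟨r, hr, hrS, C, hmid⟩ :=
    exists_ball_dist_midpoint_le_of_orthogonalGraph hw₀ hreach hS hφ hO hgraph
  obtain ⟨g, hg, hgLip⟩ :=
    exists_hasFDerivAt_lipschitzOnWith_of_dist_midpoint_le (hφ.continuousOn.mono hrS) hmid
  have hr8 : 0 < r / 8 := by positivity
  have hsub : ball w₀ (r / 8) ⊆ S := (ball_subset_ball (by linarith)).trans hrS
  have hgraph' : orthogonalGraph φ (ball w₀ (r / 8)) =
      A ∩ (O ∩ W.orthogonalProjectionOnto ⁻¹' ball w₀ (r / 8)) := by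
    rw [← inter_assoc, ← hgraph, orthogonalGraph_inter_preimage, inter_eq_right.2 hsub]
  have hmem : (w₀ : E) + (φ w₀ : E) ∈ orthogonalGraph φ (ball w₀ (r / 8)) :=
    ⟨w₀, mem_ball_self hr8, rfl⟩
  exact ⟨w₀, r / 8, g, hr8, hg, ⟨_, hgLip⟩, _,
    hO.inter (isOpen_ball.preimage W.orthogonalProjectionOnto.continuous),
    (hgraph' ▸ hmem).2, hgraph'⟩

/-- A Lipschitz manifold of dimension k with positive reach is a C^{1,1} manifold. -/
theorem stmt14 {d k : ℕ} (hk : 0 < k) (hkd : k < d)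
    (A : Set (EuclideanSpace ℝ (Fin d))) (hA : A.Nonempty)
    (hreach : 0 < setReach A)
    (hlip : ∀ a ∈ A, ∃ (W : Submodule ℝ (EuclideanSpace ℝ (Fin d))) (K : ℝ≥0)
      (c : W) (r : ℝ)
      (φ : W → (Wᗮ : Submodule ℝ (EuclideanSpace ℝ (Fin d)))),
      Module.finrank ℝ W = k ∧ 0 < r ∧ LipschitzOnWith K φ (ball c r) ∧
      ∃ O : Set (EuclideanSpace ℝ (Fin d)), IsOpen O ∧ a ∈ O ∧
        {x : EuclideanSpace ℝ (Fin d) | ∃ w ∈ ball c r,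
          x = (w : EuclideanSpace ℝ (Fin d)) + (φ w : EuclideanSpace ℝ (Fin d))}
          = A ∩ O) :
    ∀ a ∈ A, ∃ (W : Submodule ℝ (EuclideanSpace ℝ (Fin d))) (c : W) (r : ℝ)
      (φ : W → (Wᗮ : Submodule ℝ (EuclideanSpace ℝ (Fin d))))
      (g : W → (W →L[ℝ] (Wᗮ : Submodule ℝ (EuclideanSpace ℝ (Fin d))))),
      Module.finrank ℝ W = k ∧ 0 < r ∧
      (∀ w ∈ ball c r, HasFDerivAt φ (g w) w) ∧
      (∃ C : ℝ≥0, LipschitzOnWith C g (ball c r)) ∧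
      ∃ O : Set (EuclideanSpace ℝ (Fin d)), IsOpen O ∧ a ∈ O ∧
        {x : EuclideanSpace ℝ (Fin d) | ∃ w ∈ ball c r,
          x = (w : EuclideanSpace ℝ (Fin d)) + (φ w : EuclideanSpace ℝ (Fin d))}
          = A ∩ O := by
  intro a ha
  obtain ⟨W, K, c, r, φ, hdim, -, hφ, O, hO, haO, hgraph⟩ := hlip a ha
  obtain ⟨c', r', g, hg⟩ := stmt14_general ha (hreach.trans_le (iInf₂_le a ha)) isOpen_ball hφ
    hO haO hgraph
  exact ⟨W, c', r', φ, g, hdim, hg⟩
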